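/- arXiv:2201.12034 — 2 statements merged into one kernel-verified Lean document; each statement's English description precedes it below -/
import Mathlib

section
/- Let k ≥ 2 and η ≥ 1 be integers, and let S(η, k) be the k-uniform star: its vertex set consists of a center c together with η pairwise disjoint blocks of k−1 leaves each, and its edges are the η sets consisting of c together with one block. If (ρ, y) is a normalized positive eigenpair of S(η, k), then y_c^k = 1/k. -/
open Finset

/-- The edge set of the `k`-uniform star `S(η, k)`: the vertices are the center `none`
together with `η` pairwise disjoint blocks `{some (i, j) : j}` of `k − 1` leaves each,
and the `η` edges each consist of the center together with one block. -/
def starEdges (η k : ℕ) : Finset (Finset (Option (Fin η × Fin (k - 1)))) :=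
  Finset.univ.image
    (fun i : Fin η =>
      insert none ((Finset.univ : Finset (Fin (k - 1))).image (fun j => some (i, j))))

/-!
Write `w e = ∏ v ∈ e, y v` for the weight of an edge. Multiplying the eigenvalue equation at `v`
by `y v` gives `ρ * y v ^ k = ∑ e ∋ v, w e`. Summed over all `v`, each edge is counted `k` times,
so `ρ * ∑ v, y v ^ k = k * ∑ e, w e`. At a vertex `c` common to all edges, it reads
`ρ * y c ^ k = ∑ e, w e`. Comparing the two, `y c ^ k` is the fraction `1 / k` of the total mass.
-/

/-- `(ρ, y)` is an eigenpair of the adjacency tensor of the `k`-uniform hypergraph with edge set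
`E`. Neither uniformity of `E` nor positivity or normalization of `y` is part of the definition.
Since `k - 1` is truncated, only `k ≠ 0` is meaningful. -/
def IsHypergraphEigenpair {V R : Type*} [DecidableEq V] [CommSemiring R]
    (E : Finset (Finset V)) (k : ℕ) (ρ : R) (y : V → R) : Prop :=
  ∀ i, ρ * y i ^ (k - 1) = ∑ e ∈ E with i ∈ e, ∏ v ∈ e.erase i, y v

theorem sum_sum_filter_mem_eq_nsmul {V M : Type*} [Fintype V] [DecidableEq V] [AddCommMonoid M]
    {E : Finset (Finset V)} {k : ℕ} (hE : (E : Set (Finset V)).Sized k) (w : Finset V → M) :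
    ∑ v, ∑ e ∈ E with v ∈ e, w e = k • ∑ e ∈ E, w e := by
  calc ∑ v, ∑ e ∈ E with v ∈ e, w e
      = ∑ e ∈ E, ∑ _v ∈ e, w e := sum_comm' (by simp [and_comm])
    _ = ∑ e ∈ E, k • w e := sum_congr rfl fun e he => by rw [sum_const, hE he]
    _ = k • ∑ e ∈ E, w e := (smul_sum ..).symm

namespace IsHypergraphEigenpair

variable {V R : Type*} [DecidableEq V] {E : Finset (Finset V)} {k : ℕ} {ρ : R} {y : V → R}

section CommSemiring

variable [CommSemiring R]

theorem mul_pow_eq_sum_prod (h : IsHypergraphEigenpair E k ρ y) (hk : k ≠ 0) (v : V) :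
    ρ * y v ^ k = ∑ e ∈ E with v ∈ e, ∏ u ∈ e, y u := by
  calc ρ * y v ^ k
      = (∑ e ∈ E with v ∈ e, ∏ u ∈ e.erase v, y u) * y v := by
        rw [← h v, mul_assoc, pow_sub_one_mul hk]
    _ = ∑ e ∈ E with v ∈ e, ∏ u ∈ e, y u := by
        rw [sum_mul]
        exact sum_congr rfl fun e he => prod_erase_mul _ _ (mem_filter.mp he).2

theorem mul_sum_pow_eq [Fintype V] (h : IsHypergraphEigenpair E k ρ y) (hk : k ≠ 0)
    (hE : (E : Set (Finset V)).Sized k) :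
    ρ * ∑ v, y v ^ k = k * ∑ e ∈ E, ∏ u ∈ e, y u := by
  simp only [mul_sum univ, h.mul_pow_eq_sum_prod hk, sum_sum_filter_mem_eq_nsmul hE, nsmul_eq_mul]

theorem mul_pow_eq_sum_prod_of_forall_mem (h : IsHypergraphEigenpair E k ρ y) (hk : k ≠ 0)
    {c : V} (hc : ∀ e ∈ E, c ∈ e) : ρ * y c ^ k = ∑ e ∈ E, ∏ u ∈ e, y u := by
  rw [h.mul_pow_eq_sum_prod hk, filter_true_of_mem hc]

end CommSemiring

theorem eigenvalue_pos [CommSemiring R] [LinearOrder R] [IsStrictOrderedRing R]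
    (h : IsHypergraphEigenpair E k ρ y) (hy : ∀ v, 0 < y v) {e : Finset V} (he : e ∈ E)
    {v : V} (hv : v ∈ e) : 0 < ρ := by
  have hpos : 0 < ρ * y v ^ (k - 1) := by
    rw [h v]
    exact sum_pos (fun _ _ => prod_pos fun u _ => hy u) ⟨e, mem_filter.mpr ⟨he, hv⟩⟩
  exact pos_of_mul_pos_left hpos (pow_pos (hy v) _).le

end IsHypergraphEigenpair

theorem none_mem_of_mem_starEdges {η k : ℕ} {e : Finset (Option (Fin η × Fin (k - 1)))}
    (he : e ∈ starEdges η k) : none ∈ e := by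
  obtain ⟨i, -, rfl⟩ := mem_image.mp he
  exact mem_insert_self _ _

theorem sized_starEdges (η : ℕ) {k : ℕ} (hk : k ≠ 0) :
    (starEdges η k : Set (Finset (Option (Fin η × Fin (k - 1))))).Sized k := by
  intro e he
  obtain ⟨i, -, rfl⟩ := mem_image.mp (mem_coe.mp he)
  have hinj : Function.Injective fun j : Fin (k - 1) => some (i, j) :=
    (Option.some_injective _).comp (Prod.mk_right_injective i)
  rw [card_insert_of_notMem (by simp), card_image_of_injective _ hinj, card_fin,
    Nat.sub_one_add_one hk]

theorem starEdges_nonempty {η : ℕ} (hη : η ≠ 0) (k : ℕ) : (starEdges η k).Nonempty :=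
  have : NeZero η := ⟨hη⟩
  univ_nonempty.image _

theorem star_center_mass_general {V K : Type*} [Fintype V] [DecidableEq V] [Semifield K]
    {E : Finset (Finset V)} {k : ℕ} {ρ : K} {y : V → K} {c : V} (hk : k ≠ 0)
    (hE : (E : Set (Finset V)).Sized k) (hc : ∀ e ∈ E, c ∈ e)
    (heig : IsHypergraphEigenpair E k ρ y) (hρ : ρ ≠ 0) (hnorm : ∑ v, y v ^ k = 1) :
    y c ^ k = 1 / k := by
  have hmass : ρ * (k * y c ^ k) = ρ * 1 := by
    rw [mul_left_comm, heig.mul_pow_eq_sum_prod_of_forall_mem hk hc, ← heig.mul_sum_pow_eq hk hE,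
      hnorm]
  exact eq_one_div_of_mul_eq_one_right (mul_left_cancel₀ hρ hmass)

/-- If `(ρ, y)` is a normalized positive eigenpair of the `k`-uniform
star `S(η, k)`, then the center entry satisfies `y c ^ k = 1/k`. -/
theorem star_center_mass
    (η k : ℕ) (hη : 1 ≤ η) (hk : 2 ≤ k)
    (ρ : ℝ) (y : Option (Fin η × Fin (k - 1)) → ℝ) (hy : ∀ v, 0 < y v)
    (heig : ∀ i, ρ * y i ^ (k - 1) =
      ∑ e ∈ (starEdges η k).filter (fun e => i ∈ e), ∏ v ∈ e.erase i, y v)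
    (hnorm : ∑ v, y v ^ k = 1) :
    y none ^ k = 1 / k := by
  obtain ⟨e, he⟩ := starEdges_nonempty (Nat.one_le_iff_ne_zero.mp hη) k
  have hρ : 0 < ρ :=
    IsHypergraphEigenpair.eigenvalue_pos heig hy he (none_mem_of_mem_starEdges he)
  have hk₀ : k ≠ 0 := by omega
  exact star_center_mass_general hk₀ (sized_starEdges η hk₀)
    (fun _ => none_mem_of_mem_starEdges) heig hρ.ne' hnorm
end

section
/- Fix an integer k ≥ 2. For every ε > 0 there exists N such that for all η ≥ N the following holds: if (ρ, y) is a normalized positive eigenpair of the k-uniform star S(η, k) and x is a strictly positive vector with A x = λ x and Σ_v x_v² = 1, where A is the co-occurrence matrix of S(η, k) (equivalently, the adjacency matrix of the windmill graph W(η, k−1)) and λ ∈ ℝ, then |y_c^k − x_c²| > 1/2 − 1/k − ε, where c is the center vertex. Consequently the maximal Chebyshev distance Δ_k between (y_v^k)_v and (x_v²)_v over connected k-uniform hypergraphs satisfies Δ_k ≥ 1/2 − 1/k, and Δ_k → 1/2 as k → ∞. -/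
/-!
Multiplying the eigenequation at `i` by `y i` gives `ρ * y i ^ k = ∑ e ∋ i, ∏ v ∈ e, y v`. Summing
over `i` counts every edge `k` times, whereas at a vertex lying on every edge each edge is counted
once, so such a vertex carries exactly the fraction `1 / k` of `∑ v, y v ^ k`.

The windmill graph is a cone over an `r`-regular graph with `n = η * (k - 1)` vertices, where
`r = k - 2`. Comparing the smallest and the largest leaf entry shows that a positive eigenvector is
constant on the leaves; then `λ * (λ - r) = n`, and `ℓ²`-normalization gives
`x_c ^ 2 = (λ - r) / (2 * λ - r)`. Since `λ ≥ √n`, this is at least `1 / 2 - r / (2 * √n)`.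
-/

open Finset Matrix

section Eigenpair

variable {V R : Type*} [DecidableEq V]

/-- `(ρ, y)` is an eigenpair of the hypergraph on `V` with edge set `E`, all of whose edges are
meant to have `k` vertices. Positivity and normalization of `y` are separate hypotheses. -/
def IsEigenpair [CommSemiring R] (E : Finset (Finset V)) (k : ℕ) (ρ : R) (y : V → R) : Prop :=
  ∀ i, ρ * y i ^ (k - 1) = ∑ e ∈ E with i ∈ e, ∏ v ∈ e.erase i, y v

namespace IsEigenpair

variable {E : Finset (Finset V)} {k : ℕ} {ρ : R} {y : V → R}

theorem mul_pow_eq_sum_prod [CommSemiring R] (h : IsEigenpair E k ρ y) (hk : k ≠ 0) (i : V) :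
    ρ * y i ^ k = ∑ e ∈ E with i ∈ e, ∏ v ∈ e, y v := by
  rw [← pow_sub_one_mul hk, ← mul_assoc, h i, sum_mul]
  exact sum_congr rfl fun e he => prod_erase_mul e y (mem_filter.mp he).2

theorem mul_sum_pow_eq [CommSemiring R] [Fintype V] (h : IsEigenpair E k ρ y) (hk : k ≠ 0)
    (hE : ∀ e ∈ E, #e = k) : ρ * ∑ v, y v ^ k = k * ∑ e ∈ E, ∏ v ∈ e, y v :=
  calc ρ * ∑ v, y v ^ k = ∑ i, ∑ e ∈ E with i ∈ e, ∏ v ∈ e, y v := by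
        rw [mul_sum]
        exact sum_congr rfl fun i _ => h.mul_pow_eq_sum_prod hk i
    _ = ∑ e ∈ E, ∑ _i ∈ e, ∏ v ∈ e, y v := sum_comm' (by simp [and_comm])
    _ = k * ∑ e ∈ E, ∏ v ∈ e, y v := by
        rw [mul_sum]
        exact sum_congr rfl fun e he => by rw [sum_const, hE e he, nsmul_eq_mul]

theorem natCast_mul_pow_eq_sum_pow_of_forall_mem [CommRing R] [LinearOrder R]
    [IsStrictOrderedRing R] [Fintype V] (h : IsEigenpair E k ρ y) (hk : k ≠ 0)
    (hE : ∀ e ∈ E, #e = k) (hne : E.Nonempty) (hy : ∀ v, 0 < y v) {c : V} (hc : ∀ e ∈ E, c ∈ e) :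
    k * y c ^ k = ∑ v, y v ^ k := by
  have hcenter : ρ * y c ^ k = ∑ e ∈ E, ∏ v ∈ e, y v := by
    rw [h.mul_pow_eq_sum_prod hk, filter_true_of_mem hc]
  have hρ : ρ ≠ 0 := by
    refine left_ne_zero_of_mul (b := y c ^ k) (ne_of_gt ?_)
    rw [hcenter]
    exact sum_pos (fun e _ => prod_pos fun v _ => hy v) hne
  apply mul_left_cancel₀ hρ
  rw [h.mul_sum_pow_eq hk hE, ← hcenter, mul_left_comm]

end IsEigenpair

end Eigenpair

section Cone

variable {V K : Type*}

/-- The matrix obtained from the adjacency matrix `B` of a graph by adding a new vertex `none`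
adjacent to all the others, that is, the adjacency matrix of the cone over that graph. -/
def coneMatrix [Zero K] [One K] (B : Matrix V V K) : Matrix (Option V) (Option V) K :=
  Matrix.of fun
    | none, none => 0
    | none, some _ => 1
    | some _, none => 1
    | some p, some q => B p q

variable [Fintype V]

theorem coneMatrix_mulVec_none [NonAssocSemiring K] (B : Matrix V V K) (x : Option V → K) :
    (coneMatrix B *ᵥ x) none = ∑ p, x (some p) := by
  simp [coneMatrix, mulVec, dotProduct, Fintype.sum_option]

theorem coneMatrix_mulVec_some [NonAssocSemiring K] (B : Matrix V V K) (x : Option V → K) (p : V) :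
    (coneMatrix B *ᵥ x) (some p) = x none + (B *ᵥ (x ∘ some)) p := by
  simp [coneMatrix, mulVec, dotProduct, Fintype.sum_option]

section RowSum

variable [Semiring K] [PartialOrder K] [IsOrderedRing K] {B : Matrix V V K} {r : K}

theorem mul_le_mulVec_of_forall_le (hB : ∀ i j, 0 ≤ B i j) (hr : ∀ i, ∑ j, B i j = r)
    {z : V → K} {a : K} (ha : ∀ j, a ≤ z j) (i : V) : r * a ≤ (B *ᵥ z) i := by
  rw [← hr i, sum_mul]
  exact sum_le_sum fun j _ => mul_le_mul_of_nonneg_left (ha j) (hB i j)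

theorem mulVec_le_mul_of_forall_le (hB : ∀ i j, 0 ≤ B i j) (hr : ∀ i, ∑ j, B i j = r)
    {z : V → K} {a : K} (ha : ∀ j, z j ≤ a) (i : V) : (B *ᵥ z) i ≤ r * a := by
  rw [← hr i, sum_mul]
  exact sum_le_sum fun j _ => mul_le_mul_of_nonneg_left (ha j) (hB i j)

end RowSum

variable [Field K] [LinearOrder K] [IsStrictOrderedRing K] {B : Matrix V V K} {r : K}

theorem lt_and_eq_div_of_add_mulVec_eq_mul [Nonempty V] (hB : ∀ i j, 0 ≤ B i j)
    (hr : ∀ i, ∑ j, B i j = r) {z : V → K} (hz : ∀ i, 0 < z i) {a μ : K} (ha : 0 < a)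
    (h : ∀ i, a + (B *ᵥ z) i = μ * z i) : r < μ ∧ ∀ i, z i = a / (μ - r) := by
  obtain ⟨i₀, hmin⟩ := Finite.exists_min z
  obtain ⟨i₁, hmax⟩ := Finite.exists_max z
  have hlower : a ≤ (μ - r) * z i₀ := by
    linarith [h i₀, mul_le_mulVec_of_forall_le hB hr hmin i₀]
  have hupper : (μ - r) * z i₁ ≤ a := by
    linarith [h i₁, mulVec_le_mul_of_forall_le hB hr hmax i₁]
  have hpos : 0 < μ - r := pos_of_mul_pos_left (ha.trans_le hlower) (hz i₀).le
  refine ⟨sub_pos.mp hpos, fun i => le_antisymm ?_ ?_⟩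
  · exact (hmax i).trans ((le_div_iff₀' hpos).mpr hupper)
  · exact ((div_le_iff₀' hpos).mpr hlower).trans (hmin i)

variable {x : Option V → K} {μ : K}

theorem lt_and_some_eq_div_of_coneMatrix_mulVec_eq [Nonempty V] (hB : ∀ i j, 0 ≤ B i j)
    (hr : ∀ i, ∑ j, B i j = r) (hx : ∀ v, 0 < x v) (h : coneMatrix B *ᵥ x = μ • x) :
    r < μ ∧ ∀ p, x (some p) = x none / (μ - r) := by
  have hleaf (p : V) : x none + (B *ᵥ (x ∘ some)) p = μ * x (some p) := by
    rw [← coneMatrix_mulVec_some, h, Pi.smul_apply, smul_eq_mul]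
  exact lt_and_eq_div_of_add_mulVec_eq_mul hB hr (z := x ∘ some) (fun p => hx (some p))
    (hx none) hleaf

theorem mul_sub_eq_card_of_coneMatrix_mulVec_eq [Nonempty V] (hB : ∀ i j, 0 ≤ B i j)
    (hr : ∀ i, ∑ j, B i j = r) (hx : ∀ v, 0 < x v) (h : coneMatrix B *ᵥ x = μ • x) :
    μ * (μ - r) = Fintype.card V := by
  obtain ⟨hrμ, hleaf⟩ := lt_and_some_eq_div_of_coneMatrix_mulVec_eq hB hr hx h
  have hcenter : ∑ p, x (some p) = μ * x none := by
    rw [← coneMatrix_mulVec_none B, h, Pi.smul_apply, smul_eq_mul]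
  simp only [hleaf, sum_const, card_univ, nsmul_eq_mul] at hcenter
  rw [← mul_div_assoc, div_eq_iff (sub_pos.mpr hrμ).ne'] at hcenter
  apply mul_right_cancel₀ (hx none).ne'
  rw [hcenter, mul_right_comm]

theorem sq_none_eq_div_of_coneMatrix_mulVec_eq [Nonempty V] (hB : ∀ i j, 0 ≤ B i j)
    (hr : ∀ i, ∑ j, B i j = r) (hx : ∀ v, 0 < x v) (h : coneMatrix B *ᵥ x = μ • x)
    (hnorm : ∑ v, x v ^ 2 = 1) : x none ^ 2 = (μ - r) / (2 * μ - r) := by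
  obtain ⟨hrμ, hleaf⟩ := lt_and_some_eq_div_of_coneMatrix_mulVec_eq hB hr hx h
  have hcard := mul_sub_eq_card_of_coneMatrix_mulVec_eq hB hr hx h
  have hd : 0 < μ - r := sub_pos.mpr hrμ
  have hμ : 0 < μ := by
    refine pos_of_mul_pos_left ?_ hd.le
    rw [hcard]
    exact_mod_cast Fintype.card_pos
  have hdenom : 2 * μ - r ≠ 0 := by linarith
  simp only [Fintype.sum_option, hleaf, sum_const, card_univ, nsmul_eq_mul, ← hcard] at hnorm
  rw [eq_div_iff hdenom]
  field_simp at hnorm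
  linarith

end Cone

theorem half_sub_le_sq_none_of_coneMatrix_mulVec_eq {V : Type*} [Fintype V] [Nonempty V]
    {B : Matrix V V ℝ} {r : ℝ} (hB : ∀ i j, 0 ≤ B i j) (hr : ∀ i, ∑ j, B i j = r)
    {x : Option V → ℝ} {μ : ℝ} (hx : ∀ v, 0 < x v) (h : coneMatrix B *ᵥ x = μ • x)
    (hnorm : ∑ v, x v ^ 2 = 1) : 1 / 2 - r / (2 * √(Fintype.card V)) ≤ x none ^ 2 := by
  have hrμ : r < μ := (lt_and_some_eq_div_of_coneMatrix_mulVec_eq hB hr hx h).1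
  have hcard := mul_sub_eq_card_of_coneMatrix_mulVec_eq hB hr hx h
  have hr0 : 0 ≤ r := by
    inhabit V
    rw [← hr default]
    exact sum_nonneg fun j _ => hB default j
  have : 0 < √(Fintype.card V : ℝ) := by
    rw [Real.sqrt_pos]
    exact_mod_cast Fintype.card_pos
  have hsqrt_le : √(Fintype.card V : ℝ) ≤ μ := by
    rw [← hcard]
    exact Real.sqrt_le_iff.mpr ⟨by linarith, by nlinarith⟩
  calc 1 / 2 - r / (2 * √(Fintype.card V))
      ≤ 1 / 2 - r / (2 * (2 * μ - r)) := by gcongr; linarith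
    _ = x none ^ 2 := by
        have : 2 * μ - r ≠ 0 := by linarith
        rw [sq_none_eq_div_of_coneMatrix_mulVec_eq hB hr hx h hnorm]
        field_simp
        ring

/-- The co-occurrence matrix of the hypergraph with edge set `E`: off the diagonal, it counts the
edges containing both vertices. -/
def coOccurrenceMatrix {V : Type*} [DecidableEq V] (K : Type*) [AddMonoidWithOne K]
    (E : Finset (Finset V)) : Matrix V V K :=
  Matrix.of fun u v => if u = v then 0 else (#{e ∈ E | u ∈ e ∧ v ∈ e} : K)

section Star

open Kronecker

variable {η k : ℕ}

/-- The `i`-th edge of the star `S(η, k)`: the center together with the `i`-th block. -/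
def starEdge (η k : ℕ) (i : Fin η) : Finset (Option (Fin η × Fin (k - 1))) :=
  insert none (univ.image fun j => some (i, j))

theorem starEdges_eq_image : starEdges η k = univ.image (starEdge η k) := rfl

theorem none_mem_starEdge (i : Fin η) : none ∈ starEdge η k i := mem_insert_self _ _

theorem some_mem_starEdge {i : Fin η} {p : Fin η × Fin (k - 1)} :
    some p ∈ starEdge η k i ↔ p.1 = i := by
  obtain ⟨a, b⟩ := p
  simp [starEdge, eq_comm]

theorem card_starEdge (hk : 1 ≤ k) (i : Fin η) : #(starEdge η k i) = k := by
  have hinj : Function.Injective fun j : Fin (k - 1) => some (i, j) :=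
    (Option.some_injective _).comp (Prod.mk_right_injective i)
  rw [starEdge, card_insert_of_notMem (by simp), card_image_of_injective _ hinj, card_univ,
    Fintype.card_fin, Nat.sub_add_cancel hk]

theorem starEdge_injective (hk : 2 ≤ k) : Function.Injective (starEdge η k) := by
  intro a b hab
  have hmem : some (a, ⟨0, by lia⟩) ∈ starEdge η k a := some_mem_starEdge.mpr rfl
  rw [hab] at hmem
  exact some_mem_starEdge.mp hmem

theorem natCast_mul_pow_none_of_isEigenpair_starEdges {R : Type*} [CommRing R]
    [LinearOrder R] [IsStrictOrderedRing R] (hk : 1 ≤ k) (hη : 0 < η) {ρ : R}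
    {y : Option (Fin η × Fin (k - 1)) → R} (h : IsEigenpair (starEdges η k) k ρ y)
    (hy : ∀ v, 0 < y v) : k * y none ^ k = ∑ v, y v ^ k := by
  have : Nonempty (Fin η) := ⟨⟨0, hη⟩⟩
  rw [starEdges_eq_image] at h
  refine h.natCast_mul_pow_eq_sum_pow_of_forall_mem (by lia) ?_ (univ_nonempty.image _) hy ?_
  · simpa using card_starEdge hk
  · simpa using none_mem_starEdge

theorem card_filter_starEdges (hk : 2 ≤ k) (u v : Option (Fin η × Fin (k - 1))) :
    #{e ∈ starEdges η k | u ∈ e ∧ v ∈ e} = #{i | u ∈ starEdge η k i ∧ v ∈ starEdge η k i} := by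
  rw [starEdges_eq_image, filter_image, card_image_of_injective _ (starEdge_injective hk)]

theorem coOccurrenceMatrix_starEdges (K : Type*) [NonAssocSemiring K] (hk : 2 ≤ k) :
    coOccurrenceMatrix K (starEdges η k) =
      coneMatrix ((1 : Matrix (Fin η) (Fin η) K) ⊗ₖ
        (⊤ : SimpleGraph (Fin (k - 1))).adjMatrix K) := by
  ext u v
  rw [coOccurrenceMatrix, of_apply, card_filter_starEdges hk]
  rcases u with _ | ⟨i, j⟩ <;> rcases v with _ | ⟨i', j'⟩
  · simp [coneMatrix]
  · simp [coneMatrix, none_mem_starEdge, some_mem_starEdge, filter_eq]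
  · simp [coneMatrix, none_mem_starEdge, some_mem_starEdge, filter_eq]
  · by_cases hi : i = i'
    · subst hi
      simp [coneMatrix, some_mem_starEdge, filter_eq, SimpleGraph.adjMatrix_apply]
    · have : ∀ l, ¬(i = l ∧ i' = l) := fun l hl => hi (hl.1.trans hl.2.symm)
      simp [coneMatrix, some_mem_starEdge, hi, this]

theorem sum_one_kronecker_adjMatrix_top {ι κ K : Type*} [Fintype ι] [DecidableEq ι] [Fintype κ]
    [DecidableEq κ] [NonAssocSemiring K] (p : ι × κ) :
    ∑ q, ((1 : Matrix ι ι K) ⊗ₖ (⊤ : SimpleGraph κ).adjMatrix K) p q =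
      (Fintype.card κ - 1 : ℕ) := by
  have hdegree : ∑ j, (⊤ : SimpleGraph κ).adjMatrix K p.2 j = (Fintype.card κ - 1 : ℕ) := by
    simpa [mulVec, dotProduct] using
      (⊤ : SimpleGraph κ).adjMatrix_mulVec_const_apply (α := K) (a := 1) (v := p.2)
  calc ∑ q, ((1 : Matrix ι ι K) ⊗ₖ (⊤ : SimpleGraph κ).adjMatrix K) p q
      = (∑ i, (1 : Matrix ι ι K) p.1 i) * ∑ j, (⊤ : SimpleGraph κ).adjMatrix K p.2 j := by
        rw [Fintype.sum_mul_sum, Fintype.sum_prod_type]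
        rfl
    _ = (Fintype.card κ - 1 : ℕ) := by rw [hdegree]; simp [one_apply]

theorem half_sub_le_sq_none_of_coOccurrenceMatrix_starEdges (hk : 2 ≤ k) (hη : 0 < η) {μ : ℝ}
    {x : Option (Fin η × Fin (k - 1)) → ℝ} (hx : ∀ v, 0 < x v)
    (h : coOccurrenceMatrix ℝ (starEdges η k) *ᵥ x = μ • x) (hnorm : ∑ v, x v ^ 2 = 1) :
    1 / 2 - (k - 2 : ℕ) / (2 * √(η * (k - 1 : ℕ))) ≤ x none ^ 2 := by
  have : Nonempty (Fin η × Fin (k - 1)) := ⟨⟨0, hη⟩, ⟨0, by lia⟩⟩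
  rw [coOccurrenceMatrix_starEdges ℝ hk] at h
  have hbound := half_sub_le_sq_none_of_coneMatrix_mulVec_eq
    (fun p q => ?_) sum_one_kronecker_adjMatrix_top hx h hnorm
  · simpa [Nat.sub_sub] using hbound
  · rw [kroneckerMap_apply, one_apply, SimpleGraph.adjMatrix_apply]
    positivity

end Star

open Filter Topology in
theorem tendsto_div_two_mul_sqrt_natCast_mul_atTop (a : ℝ) {b : ℝ} (hb : 0 < b) :
    Tendsto (fun n : ℕ => a / (2 * √(n * b))) atTop (𝓝 0) :=
  ((Real.tendsto_sqrt_atTop.comp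
    (tendsto_natCast_atTop_atTop.atTop_mul_const hb)).const_mul_atTop two_pos).const_div_atTop a

/-- Fix `k ≥ 2`.  For every `ε > 0` there is `N` such that for all
`η ≥ N`: if `(ρ, y)` is a normalized positive eigenpair of the `k`-uniform star `S(η, k)`
and `x` is a strictly positive `ℓ²`-normalized eigenvector of the co-occurrence matrix of
`S(η, k)` (the adjacency matrix of the windmill graph `W(η, k−1)`), then the entries at
the center `c` satisfy `|y c ^ k − x c ^ 2| > 1/2 − 1/k − ε`.  Consequently the maximal
Chebyshev distance `Δ_k` satisfies `Δ_k ≥ 1/2 − 1/k`, so `Δ_k → 1/2` as `k → ∞`. -/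
theorem star_windmill_chebyshev_lower_bound
    (k : ℕ) (hk : 2 ≤ k) :
    ∀ ε : ℝ, 0 < ε → ∃ N : ℕ, ∀ η : ℕ, N ≤ η →
      ∀ (ρ : ℝ) (y : Option (Fin η × Fin (k - 1)) → ℝ),
        (∀ v, 0 < y v) →
        (∀ i, ρ * y i ^ (k - 1) =
          ∑ e ∈ (starEdges η k).filter (fun e => i ∈ e), ∏ v ∈ e.erase i, y v) →
        (∑ v, y v ^ k = 1) →
      ∀ (A : Matrix (Option (Fin η × Fin (k - 1))) (Option (Fin η × Fin (k - 1))) ℝ),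
        (∀ u v, A u v =
          if u = v then 0
          else (((starEdges η k).filter (fun e => u ∈ e ∧ v ∈ e)).card : ℝ)) →
      ∀ (lam : ℝ) (x : Option (Fin η × Fin (k - 1)) → ℝ),
        (∀ v, 0 < x v) →
        A *ᵥ x = lam • x →
        (∑ v, x v ^ 2 = 1) →
        |y none ^ k - x none ^ 2| > 1 / 2 - 1 / k - ε := by
  intro ε hε
  have hk1 : (0 : ℝ) < (k - 1 : ℕ) := by exact_mod_cast (by lia : 0 < k - 1)
  obtain ⟨N, hN⟩ := Filter.eventually_atTop.mp
    ((tendsto_div_two_mul_sqrt_natCast_mul_atTop (k - 2 : ℕ) hk1).eventually_lt_const hε)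
  refine ⟨max N 1, fun η hη ρ y hy hρy hy_norm A hA lam x hx hAx hx_norm => ?_⟩
  have hη0 : 0 < η := (le_max_right N 1).trans hη
  have hy_center : y none ^ k = 1 / k := by
    rw [eq_div_iff (by positivity), mul_comm, ← hy_norm]
    exact natCast_mul_pow_none_of_isEigenpair_starEdges (by lia) hη0 hρy hy
  have hA_eq : A = coOccurrenceMatrix ℝ (starEdges η k) := Matrix.ext hA
  have hx_center := half_sub_le_sq_none_of_coOccurrenceMatrix_starEdges hk hη0 hx (hA_eq ▸ hAx)
    hx_norm
  calc 1 / 2 - 1 / k - ε < x none ^ 2 - y none ^ k := by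
        linarith [hN η ((le_max_left N 1).trans hη)]
    _ ≤ |y none ^ k - x none ^ 2| := by
        rw [abs_sub_comm]
        exact le_abs_self _
end
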